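/- arXiv:2411.01293 — 4 statements merged into one kernel-verified Lean document; each statement's English description precedes it below -/
import Mathlib

section
/- Let D be a positive natural number, p : ℝ → ℝ^D → ℝ a smooth everywhere-positive function, F : ℝ → ℝ^D → ℝ^D a smooth time-dependent vector field, and g : ℝ → ℝ. If p satisfies the Fokker–Planck equation ∂_t p(t,x) = -div_x(F(t,x)·p(t,x)) + (1/2)·g(t)²·Δ_x p(t,x) for all t ∈ ℝ and x ∈ ℝ^D, then for all t and x: ∂_t log p(t,x) = -div_x F(t,x) + (1/2)·g(t)²·Δ_x log p(t,x) - ⟨∇_x log p(t,x), F(t,x) - (1/2)·g(t)²·∇_x log p(t,x)⟩. -/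
open scoped BigOperators RealInnerProductSpace
open MeasureTheory

/-- Divergence of a vector field on `EuclideanSpace ℝ (Fin D)`. -/
noncomputable def divg {D : ℕ} (F : EuclideanSpace ℝ (Fin D) → EuclideanSpace ℝ (Fin D))
    (x : EuclideanSpace ℝ (Fin D)) : ℝ :=
  ∑ i, fderiv ℝ F x (EuclideanSpace.single i 1) i

/-- Laplacian of a scalar field on `EuclideanSpace ℝ (Fin D)`. -/
noncomputable def lap {D : ℕ} (f : EuclideanSpace ℝ (Fin D) → ℝ)
    (x : EuclideanSpace ℝ (Fin D)) : ℝ :=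
  divg (gradient f) x

/-!
Since `∇p = p ∇(log p)`, the product rule for the divergence gives
`div (p F) = p (div F + ⟪∇(log p), F⟫)` and `Δp = p (Δ(log p) + ‖∇(log p)‖²)`.
Dividing the Fokker–Planck equation by `p` turns its left-hand side into `∂ₜ(log p)`.
-/

section Gradient

variable {E : Type*} [NormedAddCommGroup E] [InnerProductSpace ℝ E] [CompleteSpace E]
  {f : E → ℝ} {x : E}

theorem contDiffAt_gradient {m n : WithTop ℕ∞} (hf : ContDiffAt ℝ n f x) (hmn : m + 1 ≤ n) :
    ContDiffAt ℝ m (gradient f) x :=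
  (InnerProductSpace.toDual ℝ E).symm.contDiff.contDiffAt.comp x (hf.fderiv_right hmn)

theorem gradient_eq_smul_gradient_log (hf : DifferentiableAt ℝ f x) (hx : f x ≠ 0) :
    gradient f x = f x • gradient (fun y => Real.log (f y)) x := by
  rw [gradient, gradient, fderiv.log hf hx, map_smul, smul_inv_smul₀ hx]

end Gradient

section Divergence

variable {D : ℕ} {f : EuclideanSpace ℝ (Fin D) → ℝ}
  {V W : EuclideanSpace ℝ (Fin D) → EuclideanSpace ℝ (Fin D)} {x : EuclideanSpace ℝ (Fin D)}

theorem divg_congr (h : V =ᶠ[nhds x] W) : divg V x = divg W x := by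
  rw [divg, divg, h.fderiv_eq]

theorem gradient_apply (i : Fin D) :
    gradient f x i = fderiv ℝ f x (EuclideanSpace.single i 1) := by
  rw [← inner_gradient_left, EuclideanSpace.inner_single_right, one_mul, conj_trivial]

theorem divg_smul (hf : DifferentiableAt ℝ f x) (hV : DifferentiableAt ℝ V x) :
    divg (fun y => f y • V y) x = f x * divg V x + ⟪gradient f x, V x⟫ := by
  have partial_smul (i : Fin D) :
      fderiv ℝ (fun y => f y • V y) x (EuclideanSpace.single i 1) i
        = f x * fderiv ℝ V x (EuclideanSpace.single i 1) i + gradient f x i * V x i := by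
    simp [fderiv_fun_smul hf hV, gradient_apply]
  simp only [divg, partial_smul, Finset.sum_add_distrib, Finset.mul_sum, PiLp.inner_apply,
    Real.inner_apply]

theorem divg_smul_eq_mul_divg_add_inner_log (hf : DifferentiableAt ℝ f x) (hx : f x ≠ 0)
    (hV : DifferentiableAt ℝ V x) :
    divg (fun y => f y • V y) x
      = f x * (divg V x + ⟪gradient (fun y => Real.log (f y)) x, V x⟫) := by
  rw [divg_smul hf hV, gradient_eq_smul_gradient_log hf hx, real_inner_smul_left, mul_add]

theorem lap_eq_mul_lap_log_add_norm_sq (hf : ContDiffAt ℝ 2 f x) (hx : f x ≠ 0) :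
    lap f x = f x * (lap (fun y => Real.log (f y)) x
      + ‖gradient (fun y => Real.log (f y)) x‖ ^ 2) := by
  have gradient_eventuallyEq :
      gradient f =ᶠ[nhds x] fun y => f y • gradient (fun z => Real.log (f z)) y := by
    filter_upwards [hf.eventually (by simp), hf.continuousAt.eventually_ne hx] with y hy hy₀
    exact gradient_eq_smul_gradient_log (hy.differentiableAt two_ne_zero) hy₀
  have gradient_log_differentiable :
      DifferentiableAt ℝ (gradient fun y => Real.log (f y)) x :=
    (contDiffAt_gradient (hf.log hx) one_add_one_eq_two.le).differentiableAt one_ne_zero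
  rw [lap, divg_congr gradient_eventuallyEq,
    divg_smul_eq_mul_divg_add_inner_log (hf.differentiableAt two_ne_zero) hx
      gradient_log_differentiable,
    real_inner_self_eq_norm_sq, ← lap]

end Divergence

theorem log_fokker_planck_general {D : ℕ} {p : ℝ → EuclideanSpace ℝ (Fin D) → ℝ}
    {V : EuclideanSpace ℝ (Fin D) → EuclideanSpace ℝ (Fin D)} {c t : ℝ}
    {x : EuclideanSpace ℝ (Fin D)}
    (hpt : DifferentiableAt ℝ (fun τ => p τ x) t) (hpx : ContDiffAt ℝ 2 (p t) x)
    (hp₀ : p t x ≠ 0) (hV : DifferentiableAt ℝ V x)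
    (hFP : deriv (fun τ => p τ x) t = -divg (fun y => p t y • V y) x + c * lap (p t) x) :
    deriv (fun τ => Real.log (p τ x)) t
      = -divg V x + c * lap (fun y => Real.log (p t y)) x
        - ⟪gradient (fun y => Real.log (p t y)) x,
            V x - c • gradient (fun y => Real.log (p t y)) x⟫ := by
  have fokker_planck_div :
      deriv (fun τ => p τ x) t / p t x
        = -(divg V x + ⟪gradient (fun y => Real.log (p t y)) x, V x⟫)
          + c * (lap (fun y => Real.log (p t y)) x
            + ‖gradient (fun y => Real.log (p t y)) x‖ ^ 2) := by
    have hp_diff : DifferentiableAt ℝ (p t) x := hpx.differentiableAt two_ne_zero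
    rw [hFP, divg_smul_eq_mul_divg_add_inner_log hp_diff hp₀ hV,
      lap_eq_mul_lap_log_add_norm_sq hpx hp₀]
    field_simp
  rw [deriv.log hpt hp₀, fokker_planck_div, inner_sub_right, real_inner_smul_right,
    real_inner_self_eq_norm_sq]
  ring

/-- Logarithmic form of the Fokker–Planck equation. -/
theorem log_fokker_planck {D : ℕ} (hD : 0 < D)
    (p : ℝ → EuclideanSpace ℝ (Fin D) → ℝ)
    (F : ℝ → EuclideanSpace ℝ (Fin D) → EuclideanSpace ℝ (Fin D))
    (g : ℝ → ℝ)
    (hp : ContDiff ℝ (⊤ : ℕ∞) (fun q : ℝ × EuclideanSpace ℝ (Fin D) => p q.1 q.2))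
    (hppos : ∀ t x, 0 < p t x)
    (hF : ContDiff ℝ (⊤ : ℕ∞) (fun q : ℝ × EuclideanSpace ℝ (Fin D) => F q.1 q.2))
    (hFP : ∀ t x, deriv (fun τ => p τ x) t
      = - divg (fun y => p t y • F t y) x + (1 / 2) * g t ^ 2 * lap (p t) x) :
    ∀ t x, deriv (fun τ => Real.log (p τ x)) t
      = - divg (F t) x + (1 / 2) * g t ^ 2 * lap (fun y => Real.log (p t y)) x
        - ⟪gradient (fun y => Real.log (p t y)) x,
            F t x - ((1 / 2) * g t ^ 2) • gradient (fun y => Real.log (p t y)) x⟫ := by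
  intro t x
  have hp_time : ContDiff ℝ (⊤ : ℕ∞) (fun τ => p τ x) := hp.comp (contDiff_prodMk_left x)
  have hp_space : ContDiff ℝ (⊤ : ℕ∞) (p t) := hp.comp (contDiff_prodMk_right t)
  have hF_space : ContDiff ℝ (⊤ : ℕ∞) (F t) := hF.comp (contDiff_prodMk_right t)
  exact log_fokker_planck_general (hp_time.differentiable (by simp) t)
    (contDiff_infty.1 hp_space 2).contDiffAt (hppos t x).ne'
    (hF_space.differentiable (by simp) x) (hFP t x)
end

section
/- (General instantaneous change of variables.) Let D be a positive natural number, p : ℝ → ℝ^D → ℝ a smooth everywhere-positive function, and f₁, f₂ : ℝ → ℝ^D → ℝ^D smooth time-dependent vector fields. Suppose p satisfies the continuity equation ∂_t p(t,x) = -div_x(f₁(t,x)·p(t,x)) for all t ∈ ℝ and x ∈ ℝ^D (so p is the family of marginal densities of the continuous normalizing flow with drift f₁). Let z : ℝ → ℝ^D be a differentiable curve satisfying z'(t) = f₂(t, z(t)) for all t. Then for all t: (d/dt) log p(t, z(t)) = -div_x f₁(t, z(t)) + ⟨f₂(t, z(t)) - f₁(t, z(t)), ∇_x log p(t, z(t))⟩.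 -/
open scoped BigOperators RealInnerProductSpace
open MeasureTheory

/-! Dividing the continuity equation `∂ₜ p = -div (p f₁)` by `p` and expanding the divergence gives
`∂ₜ log p = -div f₁ - ⟪f₁, ∇ log p⟫`. Along a curve with velocity `f₂` the chain rule adds
`⟪f₂, ∇ log p⟫`. -/

section CurveDerivative

variable {𝕜 E F : Type*} [NontriviallyNormedField 𝕜] [NormedAddCommGroup E] [NormedSpace 𝕜 E]
  [NormedAddCommGroup F] [NormedSpace 𝕜 F]

theorem hasDerivAt_along_curve {g : 𝕜 → E → F} {z : 𝕜 → E} {v : E} {t : 𝕜}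
    (hg : DifferentiableAt 𝕜 (fun q : 𝕜 × E => g q.1 q.2) (t, z t)) (hz : HasDerivAt z v t) :
    HasDerivAt (fun τ => g τ (z τ)) (deriv (fun τ => g τ (z t)) t + fderiv 𝕜 (g t) (z t) v) t := by
  set L := fderiv 𝕜 (fun q : 𝕜 × E => g q.1 q.2) (t, z t)
  have along_curve : HasDerivAt (fun τ => g τ (z τ)) (L (1, v)) t :=
    hg.hasFDerivAt.comp_hasDerivAt (f := fun τ => (τ, z τ)) t ((hasDerivAt_id t).prodMk hz)
  have in_time : HasDerivAt (fun τ => g τ (z t)) (L (1, 0)) t :=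
    hg.hasFDerivAt.comp_hasDerivAt (f := fun τ => (τ, z t)) t
      ((hasDerivAt_id t).prodMk (hasDerivAt_const t (z t)))
  have in_space : HasFDerivAt (g t) (L.comp (.inr 𝕜 𝕜 E)) (z t) :=
    hg.hasFDerivAt.comp (f := fun y => (t, y)) (z t) (hasFDerivAt_prodMk_right t (z t))
  have split_velocity : L (1, v) = L (1, 0) + L (0, v) := by simp [← map_add]
  simpa [in_time.deriv, in_space.fderiv, split_velocity] using along_curve

end CurveDerivative

theorem gradient_log {E : Type*} [NormedAddCommGroup E] [InnerProductSpace ℝ E] [CompleteSpace E]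
    {a : E → ℝ} {x : E} (ha : DifferentiableAt ℝ a x) (hne : a x ≠ 0) :
    gradient (fun y => Real.log (a y)) x = (a x)⁻¹ • gradient a x := by
  rw [gradient, fderiv.log ha hne, map_smul, gradient]

theorem gradient_euclideanSpace_apply {ι : Type*} [Fintype ι] [DecidableEq ι]
    (a : EuclideanSpace ℝ ι → ℝ) (x : EuclideanSpace ℝ ι) (i : ι) :
    gradient a x i = fderiv ℝ a x (EuclideanSpace.single i 1) := by
  rw [← inner_gradient_left, EuclideanSpace.inner_single_right, one_mul, conj_trivial]

section Divergence

variable {D : ℕ}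

theorem divg_smul_s2 {a : EuclideanSpace ℝ (Fin D) → ℝ}
    {F : EuclideanSpace ℝ (Fin D) → EuclideanSpace ℝ (Fin D)} {x : EuclideanSpace ℝ (Fin D)}
    (ha : DifferentiableAt ℝ a x) (hF : DifferentiableAt ℝ F x) :
    divg (fun y => a y • F y) x = a x * divg F x + ⟪F x, gradient a x⟫ := by
  calc divg (fun y => a y • F y) x
    _ = ∑ i, (a x * fderiv ℝ F x (EuclideanSpace.single i 1) i + gradient a x i * F x i) := by
      simp only [divg, fderiv_fun_smul ha hF, gradient_euclideanSpace_apply, add_apply,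
        smul_apply, ContinuousLinearMap.smulRight_apply, PiLp.add_apply, PiLp.smul_apply,
        smul_eq_mul]
    _ = a x * divg F x + ⟪F x, gradient a x⟫ := by
      simp only [divg, Finset.sum_add_distrib, Finset.mul_sum, PiLp.inner_apply,
        RCLike.inner_apply, conj_trivial]

theorem hasDerivAt_log_of_continuity_equation {p : ℝ → EuclideanSpace ℝ (Fin D) → ℝ}
    {f : EuclideanSpace ℝ (Fin D) → EuclideanSpace ℝ (Fin D)} {t : ℝ}
    {x : EuclideanSpace ℝ (Fin D)} (hp : DifferentiableAt ℝ (p t) x) (hne : p t x ≠ 0)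
    (hf : DifferentiableAt ℝ f x)
    (hcont : HasDerivAt (fun τ => p τ x) (-divg (fun y => p t y • f y) x) t) :
    HasDerivAt (fun τ => Real.log (p τ x))
      (-divg f x - ⟪f x, gradient (fun y => Real.log (p t y)) x⟫) t := by
  refine (hcont.log hne).congr_deriv ?_
  rw [divg_smul_s2 hp hf, gradient_log hp hne, real_inner_smul_right]
  field_simp
  ring

theorem general_instantaneous_change_of_variables_general
    {p : ℝ → EuclideanSpace ℝ (Fin D) → ℝ}
    {f₁ : ℝ → EuclideanSpace ℝ (Fin D) → EuclideanSpace ℝ (Fin D)}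
    {z : ℝ → EuclideanSpace ℝ (Fin D)} {v : EuclideanSpace ℝ (Fin D)} {t : ℝ}
    (hp : DifferentiableAt ℝ (fun q : ℝ × EuclideanSpace ℝ (Fin D) => p q.1 q.2) (t, z t))
    (hne : p t (z t) ≠ 0) (hf₁ : DifferentiableAt ℝ (f₁ t) (z t))
    (hcont : deriv (fun τ => p τ (z t)) t = -divg (fun y => p t y • f₁ t y) (z t))
    (hz : HasDerivAt z v t) :
    HasDerivAt (fun τ => Real.log (p τ (z τ)))
      (-divg (f₁ t) (z t)
        + ⟪v - f₁ t (z t), gradient (fun y => Real.log (p t y)) (z t)⟫) t := by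
  have p_in_time : HasDerivAt (fun τ => p τ (z t)) (-divg (fun y => p t y • f₁ t y) (z t)) t :=
    hcont ▸ (hp.comp (f := fun τ => (τ, z t)) t (by fun_prop)).hasDerivAt
  have p_in_space : DifferentiableAt ℝ (p t) (z t) :=
    hp.comp (f := fun y => (t, y)) (z t) (by fun_prop)
  have log_in_time := hasDerivAt_log_of_continuity_equation p_in_space hne hf₁ p_in_time
  refine (hasDerivAt_along_curve (g := fun τ y => Real.log (p τ y)) (hp.log hne) hz).congr_deriv ?_
  rw [log_in_time.deriv, inner_sub_left]
  simp only [inner_gradient_right, conj_trivial]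
  ring

end Divergence

/-- General instantaneous change of variables: evolution of `log p` along a
particle following a dynamical system `f₂` different from the CNF drift `f₁`. -/
theorem general_instantaneous_change_of_variables {D : ℕ} (hD : 0 < D)
    (p : ℝ → EuclideanSpace ℝ (Fin D) → ℝ)
    (f₁ f₂ : ℝ → EuclideanSpace ℝ (Fin D) → EuclideanSpace ℝ (Fin D))
    (hp : ContDiff ℝ (⊤ : ℕ∞) (fun q : ℝ × EuclideanSpace ℝ (Fin D) => p q.1 q.2))
    (hppos : ∀ t x, 0 < p t x)
    (hf₁ : ContDiff ℝ (⊤ : ℕ∞) (fun q : ℝ × EuclideanSpace ℝ (Fin D) => f₁ q.1 q.2))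
    (hf₂ : ContDiff ℝ (⊤ : ℕ∞) (fun q : ℝ × EuclideanSpace ℝ (Fin D) => f₂ q.1 q.2))
    (hcont : ∀ t x, deriv (fun τ => p τ x) t = - divg (fun y => p t y • f₁ t y) x)
    (z : ℝ → EuclideanSpace ℝ (Fin D))
    (hz : ∀ t, HasDerivAt z (f₂ t (z t)) t) :
    ∀ t, deriv (fun τ => Real.log (p τ (z τ))) t
      = - divg (f₁ t) (z t)
        + ⟪f₂ t (z t) - f₁ t (z t), gradient (fun y => Real.log (p t y)) (z t)⟫ := by
  intro t
  have f₁_in_space : DifferentiableAt ℝ (f₁ t) (z t) :=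
    (hf₁.differentiable (by simp) _).comp (f := fun y => (t, y)) (z t) (by fun_prop)
  exact (general_instantaneous_change_of_variables_general (hp.differentiable (by simp) _)
    (hppos t (z t)).ne' f₁_in_space (hcont t (z t)) (hz t)).deriv
end

section
/- Let D be a positive natural number, p : ℝ → ℝ^D → ℝ a smooth everywhere-positive function, F : ℝ → ℝ^D → ℝ^D a smooth time-dependent vector field, and g : ℝ → ℝ. If p satisfies the Fokker–Planck equation ∂_t p(t,x) = -div_x(F(t,x)·p(t,x)) + (1/2)·g(t)²·Δ_x p(t,x) for all t ∈ ℝ and x ∈ ℝ^D, then for all t and x: ∂_t log p(t,x) + ⟨∇_x log p(t,x), F(t,x) - g(t)²·∇_x log p(t,x)⟩ - (1/2)·g(t)²·Δ_x log p(t,x) = -div_x F(t,x) - (1/2)·g(t)²·‖∇_x log p(t,x)‖². In particular all second-order derivatives of log p cancel: the right-hand side involves only div_x F and the first-order score ∇_x log p. -/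
/-!
Dividing the Fokker–Planck equation by `p` turns the transport term into
`-div F - ⟪∇ log p, F⟫` and, since `Δp / p = Δ log p + ‖∇ log p‖²`, the diffusion term into
`(g² / 2) (Δ log p + ‖∇ log p‖²)`. The reverse drift contributes `⟪∇ log p, F⟫ - g² ‖∇ log p‖²` and
the Itô correction `-(g² / 2) Δ log p`, so `⟪∇ log p, F⟫` and `Δ log p` cancel, leaving
`-(g² / 2) ‖∇ log p‖²` of the score terms.
-/

open scoped BigOperators RealInnerProductSpace
open MeasureTheory

section Gradient

variable {E : Type*} [NormedAddCommGroup E] [InnerProductSpace ℝ E] [CompleteSpace E]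
  {f : E → ℝ} {x : E}

theorem gradient_comp {φ : ℝ → ℝ} (hφ : DifferentiableAt ℝ φ (f x))
    (hf : DifferentiableAt ℝ f x) :
    gradient (fun y => φ (f y)) x = deriv φ (f x) • gradient f x := by
  have hcomp : HasFDerivAt (fun y => φ (f y)) (deriv φ (f x) • fderiv ℝ f x) x :=
    hφ.hasDerivAt.comp_hasFDerivAt x hf.hasFDerivAt
  rw [gradient, hcomp.fderiv, map_smul, gradient]

theorem gradient_log_s6 (hf : DifferentiableAt ℝ f x) (hx : f x ≠ 0) :
    gradient (fun y => Real.log (f y)) x = (f x)⁻¹ • gradient f x := by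
  rw [gradient_comp (Real.differentiableAt_log hx) hf, Real.deriv_log]

theorem differentiableAt_gradient (hf : ContDiffAt ℝ 2 f x) :
    DifferentiableAt ℝ (gradient f) x :=
  (InnerProductSpace.toDual ℝ E).symm.differentiableAt.comp x
    ((hf.fderiv_right (m := 1) (by norm_num)).differentiableAt one_ne_zero)

end Gradient

section DivergenceLaplacian

variable {D : ℕ} {f : EuclideanSpace ℝ (Fin D) → ℝ}
  {V W : EuclideanSpace ℝ (Fin D) → EuclideanSpace ℝ (Fin D)} {x : EuclideanSpace ℝ (Fin D)}

theorem lap_comp {φ : ℝ → ℝ} (hφ : ContDiffAt ℝ 2 φ (f x)) (hf : ContDiffAt ℝ 2 f x) :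
    lap (fun y => φ (f y)) x
      = deriv φ (f x) * lap f x + deriv (deriv φ) (f x) * ‖gradient f x‖ ^ 2 := by
  have hf_near : ∀ᶠ y in nhds x, DifferentiableAt ℝ f y :=
    (hf.eventually (by simp)).mono fun _ hy => hy.differentiableAt two_ne_zero
  have hφ_near : ∀ᶠ y in nhds x, DifferentiableAt ℝ φ (f y) :=
    hf.continuousAt.eventually
      ((hφ.eventually (by simp)).mono fun _ hu => hu.differentiableAt two_ne_zero)
  have hgrad : gradient (fun y => φ (f y)) =ᶠ[nhds x] fun y => deriv φ (f y) • gradient f y := by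
    filter_upwards [hφ_near, hf_near] with y hφy hfy using gradient_comp hφy hfy
  have hfx : DifferentiableAt ℝ f x := hf_near.self_of_nhds
  have hdφ : DifferentiableAt ℝ (deriv φ) (f x) := by
    have gradient_eq : gradient φ = deriv φ := funext fun _ => gradient_eq_deriv'
    exact gradient_eq ▸ differentiableAt_gradient hφ
  have hdφf : DifferentiableAt ℝ (fun y => deriv φ (f y)) x := hdφ.comp x hfx
  rw [lap, divg_congr hgrad, divg_smul hdφf (differentiableAt_gradient hf),
    gradient_comp hdφ hfx, real_inner_smul_left, real_inner_self_eq_norm_sq, lap]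

theorem lap_log (hf : ContDiffAt ℝ 2 f x) (hx : f x ≠ 0) :
    lap (fun y => Real.log (f y)) x
      = (f x)⁻¹ * lap f x - ‖gradient (fun y => Real.log (f y)) x‖ ^ 2 := by
  rw [lap_comp (Real.contDiffAt_log.2 hx) hf, gradient_log_s6 (hf.differentiableAt two_ne_zero) hx,
    norm_smul, mul_pow, Real.norm_eq_abs, sq_abs, Real.deriv_log', deriv_inv]
  ring

end DivergenceLaplacian

section FokkerPlanck

-- Everything happens at one instant: `V` is the forward drift `F t`, and `a` stands for `g t ^ 2`.
variable {D : ℕ} {p : ℝ → EuclideanSpace ℝ (Fin D) → ℝ}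
  {V : EuclideanSpace ℝ (Fin D) → EuclideanSpace ℝ (Fin D)} {a t : ℝ}
  {x : EuclideanSpace ℝ (Fin D)}

theorem deriv_log_of_fokkerPlanck (hpt : DifferentiableAt ℝ (fun τ => p τ x) t)
    (hpx : ContDiffAt ℝ 2 (p t) x) (hp : p t x ≠ 0) (hV : DifferentiableAt ℝ V x)
    (hFP : deriv (fun τ => p τ x) t
      = -divg (fun y => p t y • V y) x + (1 / 2) * a * lap (p t) x) :
    deriv (fun τ => Real.log (p τ x)) t
      = -divg V x - ⟪gradient (fun y => Real.log (p t y)) x, V x⟫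
        + (1 / 2) * a * (lap (fun y => Real.log (p t y)) x
          + ‖gradient (fun y => Real.log (p t y)) x‖ ^ 2) := by
  have hpx' : DifferentiableAt ℝ (p t) x := hpx.differentiableAt two_ne_zero
  rw [deriv.log hpt hp, hFP, divg_smul hpx' hV, lap_log hpx hp, sub_add_cancel,
    gradient_log_s6 hpx' hp, real_inner_smul_left]
  field_simp
  ring

theorem ito_drift_reverse_general (hpt : DifferentiableAt ℝ (fun τ => p τ x) t)
    (hpx : ContDiffAt ℝ 2 (p t) x) (hp : 0 < p t x) (hV : DifferentiableAt ℝ V x)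
    (hFP : deriv (fun τ => p τ x) t
      = -divg (fun y => p t y • V y) x + (1 / 2) * a * lap (p t) x) :
    deriv (fun τ => Real.log (p τ x)) t
        + ⟪gradient (fun y => Real.log (p t y)) x,
            V x - a • gradient (fun y => Real.log (p t y)) x⟫
        - (1 / 2) * a * lap (fun y => Real.log (p t y)) x
      = -divg V x - (1 / 2) * a * ‖gradient (fun y => Real.log (p t y)) x‖ ^ 2 := by
  rw [deriv_log_of_fokkerPlanck hpt hpx hp.ne' hV hFP, inner_sub_right, real_inner_smul_right,
    real_inner_self_eq_norm_sq]
  ring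

end FokkerPlanck

/-- Itô drift of `log p(t, x_t)` along the reverse diffusion
(analytic core of the augmented reverse SDE, Theorem 1): only the first-order score appears. -/
theorem ito_drift_reverse {D : ℕ} (hD : 0 < D)
    (p : ℝ → EuclideanSpace ℝ (Fin D) → ℝ)
    (F : ℝ → EuclideanSpace ℝ (Fin D) → EuclideanSpace ℝ (Fin D))
    (g : ℝ → ℝ)
    (hp : ContDiff ℝ (⊤ : ℕ∞) (fun q : ℝ × EuclideanSpace ℝ (Fin D) => p q.1 q.2))
    (hppos : ∀ t x, 0 < p t x)
    (hF : ContDiff ℝ (⊤ : ℕ∞) (fun q : ℝ × EuclideanSpace ℝ (Fin D) => F q.1 q.2))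
    (hFP : ∀ t x, deriv (fun τ => p τ x) t
      = - divg (fun y => p t y • F t y) x + (1 / 2) * g t ^ 2 * lap (p t) x) :
    ∀ t x, deriv (fun τ => Real.log (p τ x)) t
        + ⟪gradient (fun y => Real.log (p t y)) x,
            F t x - g t ^ 2 • gradient (fun y => Real.log (p t y)) x⟫
        - (1 / 2) * g t ^ 2 * lap (fun y => Real.log (p t y)) x
      = - divg (F t) x
        - (1 / 2) * g t ^ 2 * ‖gradient (fun y => Real.log (p t y)) x‖ ^ 2 := by
  intro t x
  have hpt : Differentiable ℝ (fun τ => p τ x) :=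
    (hp.comp (contDiff_prodMk_left x)).differentiable (by simp)
  have hpx : ContDiff ℝ 2 (p t) :=
    (hp.comp (contDiff_prodMk_right t)).of_le (WithTop.coe_le_coe.2 le_top)
  have hFx : Differentiable ℝ (F t) := (hF.comp (contDiff_prodMk_right t)).differentiable (by simp)
  exact ito_drift_reverse_general (hpt t) hpx.contDiffAt (hppos t x) (hFx x) (hFP t x)
end

section
/- Let α, σ : ℝ → ℝ be smooth with α(u) > 0 and σ(u) > 0 for all u, let λ(u) = log(α(u)²/σ(u)²), and let g(u)² = -λ'(u)·σ(u)². Fix t and define for s < t: f̃(s) = α(t)/α(s), g̃²(s) = σ(t)² - f̃(s)²·σ(s)², and ψ(s) = f̃(s)²/g̃²(s). If g̃²(s) > 0 for all s in an interval (a, t), then for all s in (a, t): (d/ds) log g̃²(s) = -ψ(s)·g(s)². -/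
open scoped BigOperators RealInnerProductSpace
open MeasureTheory

/-!
The signal-to-noise ratio turns the transition variance into `g̃²(s) = σ(t)² - α(t)² exp (-λ(s))`,
so that `s` enters only through `λ`. Differentiating gives
`d/ds g̃² = α(t)² exp (-λ) λ' = f̃² σ² λ' = -f̃² g²`, and division by `g̃²` gives the claim.
-/

/-- The log signal-to-noise ratio `λ` of the noise schedule `(α, σ)`. -/
noncomputable def logSNR (α σ : ℝ → ℝ) (u : ℝ) : ℝ :=
  Real.log (α u ^ 2 / σ u ^ 2)

/-- The squared diffusion coefficient `g²` of the linear-drift SDE with noise schedule `(α, σ)`. -/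
noncomputable def sqDiffusionCoeff (α σ : ℝ → ℝ) (u : ℝ) : ℝ :=
  -(deriv (logSNR α σ) u) * σ u ^ 2

/-- The scale `f̃(s)` of the Gaussian transition kernel from time `s` to time `t`. -/
noncomputable def transitionScale (α : ℝ → ℝ) (t s : ℝ) : ℝ :=
  α t / α s

/-- The variance `g̃²(s)` of the Gaussian transition kernel from time `s` to time `t`. The formula
is used for all `s` and `t`, so that its value can be negative. -/
noncomputable def transitionVariance (α σ : ℝ → ℝ) (t s : ℝ) : ℝ :=
  σ t ^ 2 - transitionScale α t s ^ 2 * σ s ^ 2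

/-- The ratio `ψ(s) = f̃(s)² / g̃²(s)` of squared scale to variance of the Gaussian transition
kernel from time `s` to time `t`. -/
noncomputable def transitionSNR (α σ : ℝ → ℝ) (t s : ℝ) : ℝ :=
  transitionScale α t s ^ 2 / transitionVariance α σ t s

section NoiseSchedule

variable {α σ : ℝ → ℝ} {s : ℝ}

theorem exp_neg_logSNR (hα₀ : α s ≠ 0) (hσ₀ : σ s ≠ 0) :
    Real.exp (-logSNR α σ s) = σ s ^ 2 / α s ^ 2 := by
  rw [logSNR, Real.exp_neg, Real.exp_log (by positivity), inv_div]

theorem differentiableAt_logSNR (hα : DifferentiableAt ℝ α s) (hσ : DifferentiableAt ℝ σ s)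
    (hα₀ : α s ≠ 0) (hσ₀ : σ s ≠ 0) : DifferentiableAt ℝ (logSNR α σ) s :=
  ((hα.pow 2).div (hσ.pow 2) (pow_ne_zero 2 hσ₀)).log
    (div_ne_zero (pow_ne_zero 2 hα₀) (pow_ne_zero 2 hσ₀))

theorem transitionScale_sq_mul_sq (t : ℝ) (hα₀ : α s ≠ 0) (hσ₀ : σ s ≠ 0) :
    transitionScale α t s ^ 2 * σ s ^ 2 = α t ^ 2 * Real.exp (-logSNR α σ s) := by
  rw [exp_neg_logSNR hα₀ hσ₀, transitionScale]
  ring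

theorem hasDerivAt_transitionVariance (t : ℝ) (hα : DifferentiableAt ℝ α s)
    (hσ : DifferentiableAt ℝ σ s) (hα₀ : α s ≠ 0) (hσ₀ : σ s ≠ 0) :
    HasDerivAt (transitionVariance α σ t)
      (-(transitionScale α t s ^ 2 * sqDiffusionCoeff α σ s)) s := by
  have variance_eq : transitionVariance α σ t =ᶠ[nhds s]
      fun u => σ t ^ 2 - α t ^ 2 * Real.exp (-logSNR α σ u) := by
    filter_upwards [hα.continuousAt.eventually_ne hα₀, hσ.continuousAt.eventually_ne hσ₀]
      with u hαu hσu
    rw [transitionVariance, transitionScale_sq_mul_sq t hαu hσu]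
  have deriv_eq : -(transitionScale α t s ^ 2 * sqDiffusionCoeff α σ s) =
      -(α t ^ 2 * (Real.exp (-logSNR α σ s) * -deriv (logSNR α σ) s)) :=
    calc -(transitionScale α t s ^ 2 * sqDiffusionCoeff α σ s)
        = transitionScale α t s ^ 2 * σ s ^ 2 * deriv (logSNR α σ) s := by
          rw [sqDiffusionCoeff]; ring
      _ = α t ^ 2 * Real.exp (-logSNR α σ s) * deriv (logSNR α σ) s := by
          rw [transitionScale_sq_mul_sq t hα₀ hσ₀]
      _ = -(α t ^ 2 * (Real.exp (-logSNR α σ s) * -deriv (logSNR α σ) s)) := by ring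
  have hlogSNR := (differentiableAt_logSNR hα hσ hα₀ hσ₀).hasDerivAt
  rw [deriv_eq]
  exact ((hlogSNR.neg.exp.const_mul (α t ^ 2)).const_sub (σ t ^ 2)).congr_of_eventuallyEq
    variance_eq

theorem log_transition_variance_deriv_general {t : ℝ} (hα : DifferentiableAt ℝ α s)
    (hσ : DifferentiableAt ℝ σ s) (hα₀ : α s ≠ 0) (hσ₀ : σ s ≠ 0)
    (hpos : 0 < transitionVariance α σ t s) :
    HasDerivAt (fun u => Real.log (transitionVariance α σ t u))
      (-(transitionSNR α σ t s) * sqDiffusionCoeff α σ s) s := by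
  convert (hasDerivAt_transitionVariance t hα hσ hα₀ hσ₀).log hpos.ne' using 1
  rw [transitionSNR]
  ring

end NoiseSchedule

/-- Derivative of the log transition variance:
`(d/ds) log g̃²(s) = -ψ(s)·g(s)²` (Appendix H). -/
theorem log_transition_variance_deriv (α σ : ℝ → ℝ)
    (hα : ContDiff ℝ (⊤ : ℕ∞) α) (hσ : ContDiff ℝ (⊤ : ℕ∞) σ)
    (hαpos : ∀ u, 0 < α u) (hσpos : ∀ u, 0 < σ u)
    (lam gsq : ℝ → ℝ)
    (hlam : ∀ u, lam u = Real.log (α u ^ 2 / σ u ^ 2))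
    (hgsq : ∀ u, gsq u = -(deriv lam u) * σ u ^ 2)
    (t : ℝ) (ft gt2 ψ : ℝ → ℝ)
    (hft : ∀ s, ft s = α t / α s)
    (hgt2 : ∀ s, gt2 s = σ t ^ 2 - ft s ^ 2 * σ s ^ 2)
    (hψ : ∀ s, ψ s = ft s ^ 2 / gt2 s)
    (a : ℝ) (hgt2pos : ∀ s ∈ Set.Ioo a t, 0 < gt2 s) :
    ∀ s ∈ Set.Ioo a t, deriv (fun u => Real.log (gt2 u)) s = -(ψ s) * gsq s := by
  rcases funext hlam, funext hgsq, funext hft, funext hgt2, funext hψ with ⟨rfl, rfl, rfl, rfl, rfl⟩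
  exact fun s hs => (log_transition_variance_deriv_general (hα.differentiable (by simp) s)
    (hσ.differentiable (by simp) s) (hαpos s).ne' (hσpos s).ne' (hgt2pos s hs)).deriv
end
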